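/- arXiv:math/0609361 — 9 statements merged into one kernel-verified Lean document; each statement's English description precedes it below -/
import Mathlib

section
/- Let u be a t × t matrix over ℤ_p such that p^{b_j} divides the entry u_{i,j} for all i, j. Write the characteristic polynomial of u as Σ_{s=0}^{t} d_s X^{t−s} (so d_0 = 1). Then for every 0 ≤ s ≤ t, the coefficient d_s is divisible by p^{B(s)}. -/
/-!
Up to sign, the coefficient of degree `t - s` of the characteristic polynomial is the sum of the
`s × s` principal minors. If `c j` divides every entry of column `j`, the minor on an index set `S`
is divisible by `∏ j ∈ S, c j`. If moreover each `c i` with `i ∈ I` divides each `c j` with `j ∉ I`,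
exchanging the elements of `I \ S` for those of `S \ I` shows that `∏ i ∈ I, c i` divides this
product for every `S` with as many elements as `I`. The Newton bound is the case `c j = p ^ b j`,
with `I` the first `s` indices.
-/

section ProdDvd

variable {ι κ M : Type*} [CommMonoid M]

theorem prod_dvd_prod_of_card_le {f : ι → M} {g : κ → M} {A : Finset ι} {B : Finset κ}
    (hcard : A.card ≤ B.card) (hdvd : ∀ a ∈ A, ∀ b ∈ B, f a ∣ g b) :
    ∏ a ∈ A, f a ∣ ∏ b ∈ B, g b := by
  obtain ⟨e⟩ : Nonempty (A ↪ B) := Function.Embedding.nonempty_of_card_le (by simpa using hcard)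
  rw [← Finset.prod_coe_sort A, ← Finset.prod_coe_sort B]
  calc ∏ a : A, f a ∣ ∏ a : A, g (e a) :=
        Finset.prod_dvd_prod_of_dvd _ _ fun a _ => hdvd a a.2 (e a) (e a).2
    _ = ∏ b ∈ Finset.univ.map e, g b := (Finset.prod_map Finset.univ e fun b : B => g b).symm
    _ ∣ ∏ b : B, g b := Finset.prod_dvd_prod_of_subset _ _ _ (Finset.subset_univ _)

theorem prod_dvd_prod_of_card_le_of_forall_notMem {c : ι → M} {I S : Finset ι}
    (hcard : I.card ≤ S.card) (hc : ∀ i ∈ I, ∀ j ∉ I, c i ∣ c j) :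
    ∏ i ∈ I, c i ∣ ∏ i ∈ S, c i := by
  classical
  have hexchange : ∏ i ∈ I \ S, c i ∣ ∏ i ∈ S \ I, c i :=
    prod_dvd_prod_of_card_le (Finset.card_sdiff_le_card_sdiff_iff.mpr hcard) fun i hi j hj =>
      hc i (Finset.mem_sdiff.mp hi).1 j (Finset.mem_sdiff.mp hj).2
  rw [← Finset.prod_inter_mul_prod_sdiff I S, ← Finset.prod_inter_mul_prod_sdiff S I,
    Finset.inter_comm S I]
  exact mul_dvd_mul_left _ hexchange

end ProdDvd

section Matrix

variable {ι R : Type*} [Fintype ι] [DecidableEq ι] [CommRing R]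

theorem prod_dvd_det_of_forall_dvd {c : ι → R} {A : Matrix ι ι R} (hA : ∀ i j, c j ∣ A i j) :
    ∏ j, c j ∣ A.det := by
  choose v hv using hA
  have hfactor : A = Matrix.of fun i j => c j * v i j := Matrix.ext hv
  rw [hfactor, Matrix.det_mul_row c v]
  exact dvd_mul_right _ _

theorem newton_lower_bound_matrix_general {c : ι → R} {u : Matrix ι ι R} {I : Finset ι}
    (hc : ∀ i ∈ I, ∀ j ∉ I, c i ∣ c j) (hu : ∀ i j, c j ∣ u i j) :
    ∏ i ∈ I, c i ∣ u.charpoly.coeff (Fintype.card ι - I.card) := by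
  rw [Matrix.charpoly_coeff_eq_sum_minors u I.card I.card_le_univ]
  refine (Finset.dvd_sum fun S hS => ?_).mul_left _
  have hcard : I.card ≤ S.card := (Finset.mem_powersetCard.mp hS).2.ge
  calc ∏ i ∈ I, c i ∣ ∏ i ∈ S, c i := prod_dvd_prod_of_card_le_of_forall_notMem hcard hc
    _ = ∏ i : S, c i := (Finset.prod_coe_sort S c).symm
    _ ∣ (u.submatrix (Subtype.val : S → ι) Subtype.val).det :=
      prod_dvd_det_of_forall_dvd fun i j => hu i j

end Matrix

theorem newton_lower_bound_matrix
    (p : ℕ) [Fact p.Prime] (n t : ℕ) (hn : 0 < n) (ht : 1 ≤ t)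
    (a : Fin t → ℕ) (ha : Antitone a) (han : ∀ i, a i ≤ n)
    (u : Matrix (Fin t) (Fin t) ℤ_[p])
    (hu : ∀ i j, ((p : ℤ_[p]) ^ (n - a j)) ∣ u i j)
    (s : ℕ) (hs : s ≤ t) :
    ((p : ℤ_[p]) ^ (∑ i ∈ Finset.univ.filter (fun i : Fin t => (i : ℕ) < s), (n - a i))) ∣
      u.charpoly.coeff (t - s) := by
  have hdvd := newton_lower_bound_matrix_general
    (I := Finset.univ.filter fun i : Fin t => (i : ℕ) < s)
    (fun i hi j hj => pow_dvd_pow _ (Nat.sub_le_sub_left (ha (by grind)) n)) hu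
  simpa only [Finset.prod_pow_eq_pow_sum, Fintype.card_fin, Fin.card_filter_val_lt,
    min_eq_right hs] using hdvd
end

section
/- Let u and u′ be t × t matrices over ℤ_p such that for all i, j: p^{b_j} divides u_{i,j}, p^{b_j} divides u′_{i,j}, and p^{a_j} divides u_{i,j} − u′_{i,j}. Let M = ⌈n/2⌉. Write the characteristic polynomials of u and u′ as Σ_{s=0}^{t} d_s X^{t−s} and Σ_{s=0}^{t} d′_s X^{t−s} respectively. Then for every 1 ≤ s ≤ t, d_s ≡ d′_s modulo p^{M + B(s−1)}. -/
/-!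
Expanding `d_s` into principal minors and these into products over permutations, one has to
compare two products whose factors, one for each column `j` in a set of size `s`, are divisible by
`p ^ b j`. Replace the factors one at a time. Each step changes a single factor by a multiple of
`p ^ max (a j) (b j)`, hence of `p ^ M` as `a j + b j = n`, while the `s - 1` other factors
contribute at least `p ^ B(s - 1)` because `b` is nondecreasing.
-/

open Finset

section CommRing

variable {R ι : Type*} [CommRing R] [DecidableEq ι] {d e : ι → R} {c : R}

theorem dvd_prod_sub_prod {S : Finset ι} {f g : ι → R} (hf : ∀ i ∈ S, d i ∣ f i)
    (hg : ∀ i ∈ S, d i ∣ g i) (hfg : ∀ i ∈ S, e i ∣ f i - g i)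
    (hc : ∀ i ∈ S, c ∣ e i * ∏ j ∈ S.erase i, d j) :
    c ∣ ∏ i ∈ S, f i - ∏ i ∈ S, g i := by
  -- The multiplier `r` collects the factors already replaced.
  suffices h : ∀ r, (∀ i ∈ S, c ∣ r * (e i * ∏ j ∈ S.erase i, d j)) →
      c ∣ r * (∏ i ∈ S, f i - ∏ i ∈ S, g i) by
    simpa only [one_mul] using h 1 (by simpa only [one_mul] using hc)
  clear hc
  induction S using Finset.induction_on with
  | empty => simp
  | insert x S hx ih =>
    intro r hr
    simp only [forall_mem_insert] at hf hg hfg hr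
    obtain ⟨hrx, hrS⟩ := hr
    rw [erase_insert hx] at hrx
    have replace_x : c ∣ r * ((f x - g x) * ∏ i ∈ S, f i) :=
      hrx.trans (mul_dvd_mul_left r (mul_dvd_mul hfg.1 (prod_dvd_prod_of_dvd _ _ hf.2)))
    have replace_S : c ∣ r * g x * (∏ i ∈ S, f i - ∏ i ∈ S, g i) := by
      refine ih hf.2 hg.2 hfg.2 (r * g x) fun i hi => ?_
      have hxi : x ≠ i := fun h => hx (h ▸ hi)
      have hri := hrS i hi
      rw [erase_insert_of_ne hxi, prod_insert fun h => hx (mem_of_mem_erase h)] at hri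
      calc c ∣ r * (e i * (d x * ∏ j ∈ S.erase i, d j)) := hri
        _ = r * d x * (e i * ∏ j ∈ S.erase i, d j) := by ring
        _ ∣ r * g x * (e i * ∏ j ∈ S.erase i, d j) :=
          mul_dvd_mul_right (mul_dvd_mul_left r hg.1) _
    rw [prod_insert hx, prod_insert hx]
    convert dvd_add replace_x replace_S using 1
    ring

variable [Fintype ι] {A B : Matrix ι ι R}

theorem dvd_det_sub_det (hA : ∀ i j, d j ∣ A i j) (hB : ∀ i j, d j ∣ B i j)
    (hAB : ∀ i j, e j ∣ A i j - B i j) (hc : ∀ j, c ∣ e j * ∏ k ∈ univ.erase j, d k) :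
    c ∣ A.det - B.det := by
  rw [Matrix.det_apply', Matrix.det_apply', ← sum_sub_distrib]
  refine dvd_sum fun σ _ => ?_
  rw [← mul_sub]
  exact (dvd_prod_sub_prod (fun j _ => hA (σ j) j) (fun j _ => hB (σ j) j)
    (fun j _ => hAB (σ j) j) fun j _ => hc j).mul_left _

theorem dvd_charpoly_coeff_sub {s : ℕ} (hs : s ≤ Fintype.card ι) (hA : ∀ i j, d j ∣ A i j)
    (hB : ∀ i j, d j ∣ B i j) (hAB : ∀ i j, e j ∣ A i j - B i j)
    (hc : ∀ S : Finset ι, #S = s → ∀ j ∈ S, c ∣ e j * ∏ k ∈ S.erase j, d k) :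
    c ∣ A.charpoly.coeff (Fintype.card ι - s) - B.charpoly.coeff (Fintype.card ι - s) := by
  rw [Matrix.charpoly_coeff_eq_sum_minors _ _ hs, Matrix.charpoly_coeff_eq_sum_minors _ _ hs,
    ← mul_sub, ← sum_sub_distrib]
  refine (dvd_sum fun S hS => ?_).mul_left _
  refine dvd_det_sub_det (fun i j => hA i j) (fun i j => hB i j) (fun i j => hAB i j) fun j => ?_
  have map_erase_eq : (univ.erase j).map (Function.Embedding.subtype (· ∈ S)) = S.erase j := by
    rw [map_erase, univ_eq_attach]
    exact congrArg (·.erase (j : ι)) attach_map_val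
  have hcj := hc S (mem_powersetCard.mp hS).2 j j.2
  rwa [← map_erase_eq, prod_map] at hcj

end CommRing

theorem sum_le_sum_of_isLowerSet {ι M : Type*} [LinearOrder ι] [AddCommMonoid M] [Preorder M]
    [IsOrderedAddMonoid M] {f : ι → M} (hf : Monotone f) {L T : Finset ι}
    (hL : IsLowerSet (L : Set ι)) (hLT : #L = #T) : ∑ i ∈ L, f i ≤ ∑ i ∈ T, f i := by
  let φ : ↥(L \ T) ≃ ↥(T \ L) := Finset.equivOfCardEq (card_sdiff_comm hLT)
  have le_φ (x : ↥(L \ T)) : (x : ι) ≤ φ x := by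
    by_contra! h
    exact (mem_sdiff.mp (φ x).2).2 (hL h.le (mem_sdiff.mp x.2).1)
  have sum_sdiff_le : ∑ i ∈ L \ T, f i ≤ ∑ i ∈ T \ L, f i := by
    rw [← sum_coe_sort (L \ T), ← sum_coe_sort (T \ L), ← φ.sum_comp]
    exact sum_le_sum fun x _ => hf (le_φ x)
  rw [← sum_inter_add_sum_sdiff L T, ← sum_inter_add_sum_sdiff T L, inter_comm T L]
  gcongr

theorem pow_dvd_charpoly_coeff_sub {R ι : Type*} [CommRing R] [LinearOrder ι] [Fintype ι] {q : R}
    {M : ℕ} {b : ι → ℕ} (hb : Monotone b) {A B : Matrix ι ι R} (hA : ∀ i j, q ^ b j ∣ A i j)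
    (hB : ∀ i j, q ^ b j ∣ B i j) (hAB : ∀ i j, q ^ M ∣ A i j - B i j) {L : Finset ι}
    (hL : IsLowerSet (L : Set ι)) (hcard : #L < Fintype.card ι) :
    q ^ (M + ∑ i ∈ L, b i) ∣ A.charpoly.coeff (Fintype.card ι - (#L + 1)) -
      B.charpoly.coeff (Fintype.card ι - (#L + 1)) := by
  refine dvd_charpoly_coeff_sub hcard hA hB hAB fun S hS j hj => ?_
  rw [prod_pow_eq_pow_sum, ← pow_add]
  have hLS : #L = #(S.erase j) := by rw [card_erase_of_mem hj, hS, Nat.add_sub_cancel]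
  exact pow_dvd_pow q (Nat.add_le_add_left (sum_le_sum_of_isLowerSet hb hL hLS) M)

theorem charpoly_coeff_congruence_general {R : Type*} [CommRing R] (q : R) {n t : ℕ}
    {a b : Fin t → ℕ} (hb : Monotone b) (hab : ∀ j, n ≤ a j + b j)
    {u u' : Matrix (Fin t) (Fin t) R} (hu : ∀ i j, q ^ b j ∣ u i j)
    (hu' : ∀ i j, q ^ b j ∣ u' i j) (huu' : ∀ i j, q ^ a j ∣ u i j - u' i j)
    {s : ℕ} (hs : s < t) :
    q ^ ((n + 1) / 2 + ∑ i ∈ ({i | (i : ℕ) < s} : Finset (Fin t)), b i) ∣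
      u.charpoly.coeff (t - (s + 1)) - u'.charpoly.coeff (t - (s + 1)) := by
  have hM (i j) : q ^ ((n + 1) / 2) ∣ u i j - u' i j := by
    obtain h | h : (n + 1) / 2 ≤ a j ∨ (n + 1) / 2 ≤ b j := by have := hab j; omega
    · exact (pow_dvd_pow q h).trans (huu' i j)
    · exact (pow_dvd_pow q h).trans (dvd_sub (hu i j) (hu' i j))
  have hL : IsLowerSet (({i | (i : ℕ) < s} : Finset (Fin t)) : Set (Fin t)) := by
    intro i j hji hi
    simp only [coe_filter_univ, Set.mem_ofPred_eq] at hi ⊢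
    exact lt_of_le_of_lt hji hi
  have hcard : #{i : Fin t | (i : ℕ) < s} = s := by
    rw [Fin.card_filter_val_lt, min_eq_right hs.le]
  simpa only [hcard, Fintype.card_fin] using
    pow_dvd_charpoly_coeff_sub hb hu hu' hM hL (by rwa [hcard, Fintype.card_fin])

theorem charpoly_coeff_congruence
    (p : ℕ) [Fact p.Prime] (n t : ℕ) (hn : 0 < n) (ht : 1 ≤ t)
    (a : Fin t → ℕ) (ha : Antitone a) (han : ∀ i, a i ≤ n)
    (u u' : Matrix (Fin t) (Fin t) ℤ_[p])
    (hu : ∀ i j, ((p : ℤ_[p]) ^ (n - a j)) ∣ u i j)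
    (hu' : ∀ i j, ((p : ℤ_[p]) ^ (n - a j)) ∣ u' i j)
    (huu' : ∀ i j, ((p : ℤ_[p]) ^ (a j)) ∣ (u i j - u' i j))
    (s : ℕ) (hs1 : 1 ≤ s) (hst : s ≤ t) :
    ((p : ℤ_[p]) ^ ((n + 1) / 2 +
        ∑ i ∈ Finset.univ.filter (fun i : Fin t => (i : ℕ) < s - 1), (n - a i))) ∣
      (u.charpoly.coeff (t - s) - u'.charpoly.coeff (t - s)) := by
  obtain ⟨s, rfl⟩ := Nat.exists_eq_add_of_le' hs1
  exact charpoly_coeff_congruence_general (p : ℤ_[p]) (fun _ _ h => Nat.sub_le_sub_left (ha h) n)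
    (fun _ => le_add_tsub) hu hu' huu' hst
end

section
/- Let A be a commutative ring, I an ideal of A, and p a prime number whose image p·1_A lies in I. Let n ≥ 1 and let a, b ∈ A with a − b ∈ I^n. Then for every natural number s, a^{p^s} − b^{p^s} ∈ I^{n+s}. -/
/-!
Factor `a ^ k - b ^ k = (∑ i < k, a ^ i * b ^ (k - 1 - i)) * (a - b)`. If `a ≡ b` modulo `I`, the
sum is congruent to `k * b ^ (k - 1)`, so it lies in `I` as soon as `k` does: each `p`-th power
gains one factor of `I`.
-/

section PowSubPow

variable {A : Type*} [CommRing A] {I J : Ideal A} {a b : A}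

theorem geom_sum₂_mem_of_sub_mem {k : ℕ} (hk : (k : A) ∈ I) (hab : a - b ∈ I) :
    ∑ i ∈ Finset.range k, a ^ i * b ^ (k - 1 - i) ∈ I := by
  have hmk : Ideal.Quotient.mk I a = Ideal.Quotient.mk I b :=
    (Ideal.Quotient.mk_eq_mk_iff_sub_mem a b).mpr hab
  have hk_zero : (k : A ⧸ I) = 0 := by
    rw [← map_natCast (Ideal.Quotient.mk I), Ideal.Quotient.eq_zero_iff_mem.mpr hk]
  rw [← Ideal.Quotient.eq_zero_iff_mem, RingHom.map_geom_sum₂, hmk, geom_sum₂_self, hk_zero,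
    zero_mul]

theorem pow_sub_pow_mem_mul {k : ℕ} (hJI : J ≤ I) (hk : (k : A) ∈ I) (hab : a - b ∈ J) :
    a ^ k - b ^ k ∈ I * J := by
  rw [← geom_sum₂_mul]
  exact Ideal.mul_mem_mul (geom_sum₂_mem_of_sub_mem hk (hJI hab)) hab

theorem pow_p_pow_sub_mem_ideal_pow_general {p : ℕ} (hJI : J ≤ I) (hpI : (p : A) ∈ I)
    (hab : a - b ∈ J) (s : ℕ) : a ^ p ^ s - b ^ p ^ s ∈ I ^ s * J := by
  induction s with
  | zero => simpa using hab
  | succ s ih =>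
    have hle : I ^ s * J ≤ I := Ideal.mul_le_right.trans hJI
    rw [pow_succ p, pow_mul, pow_mul, pow_succ', mul_assoc]
    exact pow_sub_pow_mem_mul hle hpI ih

end PowSubPow

theorem pow_p_pow_sub_mem_ideal_pow
    (A : Type*) [CommRing A] (I : Ideal A) (p : ℕ) (hp : p.Prime)
    (hpI : (p : A) ∈ I) (n : ℕ) (hn : 1 ≤ n)
    (a b : A) (hab : a - b ∈ I ^ n) :
    ∀ s : ℕ, a ^ (p ^ s) - b ^ (p ^ s) ∈ I ^ (n + s) := by
  intro s
  rw [add_comm, pow_add]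
  have hle : I ^ n ≤ I := Ideal.pow_le_self (Nat.one_le_iff_ne_zero.mp hn)
  exact pow_p_pow_sub_mem_ideal_pow_general hle hpI hab s
end

section
/- Let b, d ∈ ℤ_p with d ≡ 1 modulo p, and let n ≥ 1. Then the polynomial Y^{p^{n−1}} − (bX + dY)^{p^{n−1}} lies in J^n. -/
/-!
Modulo `J` we have `bX + dY ≡ Y`. Since `p ∈ J`, raising a congruence modulo `J ^ k`, `k ≥ 1`, to
the `p`-th power improves it to one modulo `J ^ (k + 1)`: in the factorization
`u ^ p - v ^ p = (u - v) * ∑ u ^ i * v ^ (p - 1 - i)` the sum is `≡ p * v ^ (p - 1) ≡ 0` modulo `J`.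
-/

theorem smodEq_mul_add_mul {A : Type*} [CommRing A] {I : Ideal A} {d x : A}
    (hx : x ∈ I) (hd : d - 1 ∈ I) (b y : A) : y ≡ b * x + d * y [SMOD I] := by
  have hbx : b * x ≡ 0 [SMOD I] := SModEq.zero.mpr (I.mul_mem_left b hx)
  have hdy : d * y ≡ 1 * y [SMOD I] := (SModEq.sub_mem.mpr hd).mul .rfl
  simpa only [zero_add, one_mul] using (hbx.add hdy).symm

theorem y_pow_sub_mem_ideal_pow_general {A : Type*} [CommRing A] {I : Ideal A} {p : ℕ} {d x : A}
    (hp : (p : A) ∈ I) (hx : x ∈ I) (hd : d - 1 ∈ I) (b y : A) (m : ℕ) :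
    y ^ p ^ m - (b * x + d * y) ^ p ^ m ∈ I ^ (m + 1) :=
  SModEq.sub_mem.mp ((smodEq_mul_add_mul hx hd b y).pow_pow_add_one hp m)

open MvPolynomial in
theorem y_pow_sub_mem_ideal_pow
    (p : ℕ) [Fact p.Prime] (b d : ℤ_[p]) (hd : (p : ℤ_[p]) ∣ (d - 1))
    (n : ℕ) (hn : 1 ≤ n) :
    (X 1 : MvPolynomial (Fin 2) ℤ_[p]) ^ (p ^ (n - 1)) -
        (C b * X 0 + C d * X 1) ^ (p ^ (n - 1)) ∈
      (Ideal.span {(C (p : ℤ_[p]) : MvPolynomial (Fin 2) ℤ_[p]), X 0}) ^ n := by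
  obtain ⟨m, rfl⟩ := Nat.exists_eq_add_of_le' hn
  have hCd : (C (p : ℤ_[p]) : MvPolynomial (Fin 2) ℤ_[p]) ∣ C d - 1 := by
    simpa only [map_sub, map_one] using map_dvd (C (σ := Fin 2)) hd
  exact y_pow_sub_mem_ideal_pow_general (Ideal.subset_span (by simp)) (Ideal.subset_span (by simp))
    (Ideal.mem_of_dvd _ hCd (Ideal.subset_span (by simp))) (C b) (X 1) m
end

section
/- Let a, b, c, d ∈ ℤ_p with p ∣ c and d ≡ 1 modulo p, let n ≥ 1, and let σ be the ℤ_p-algebra endomorphism of ℤ_p[X,Y] determined by σ(X) = aX + cY and σ(Y) = bX + dY. Let φ : ℤ_p[X,Y] → ℤ_p[X,Y] be multiplication by Y^{p^{n−1}}, i.e., φ(f) = f · Y^{p^{n−1}}. Then for every f ∈ ℤ_p[X,Y], φ(σ(f)) − σ(φ(f)) ∈ J^n. -/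
/-! Since `p ∈ J`, raising to the `p`-th power improves a congruence modulo `J ^ m` to one modulo
`J ^ (m + 1)`. As `σ` fixes `Y` modulo `J`, it fixes `Y ^ p ^ (n - 1)` modulo `J ^ n`. -/

theorem mul_add_mul_smodEq_of_dvd_sub_one {A : Type*} [CommRing A] {r d : A} (hd : r ∣ d - 1)
    (b x y : A) : b * x + d * y ≡ y [SMOD Ideal.span {r, x}] := by
  obtain ⟨e, he⟩ := hd
  rw [SModEq.sub_mem, Ideal.mem_span_pair]
  exact ⟨e * y, b, by linear_combination -y * he⟩

theorem phi_sigma_commutator_mem_ideal_pow_general {A F : Type*} [CommRing A] [FunLike F A A]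
    [MonoidHomClass F A A] {J : Ideal A} {p : ℕ} (hp : (p : A) ∈ J) (σ : F) {y : A}
    (hσy : σ y ≡ y [SMOD J]) (k : ℕ) (f : A) :
    σ f * y ^ p ^ k - σ (f * y ^ p ^ k) ∈ J ^ (k + 1) := by
  have hpow : y ^ p ^ k - σ y ^ p ^ k ∈ J ^ (k + 1) :=
    SModEq.sub_mem.mp (SModEq.pow_pow_add_one hp hσy.symm k)
  rw [map_mul, map_pow, ← mul_sub]
  exact Ideal.mul_mem_left _ _ hpow

open MvPolynomial in
theorem phi_sigma_commutator_mem_ideal_pow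
    (p : ℕ) [Fact p.Prime] (a b c d : ℤ_[p])
    (hpc : (p : ℤ_[p]) ∣ c) (hd : (p : ℤ_[p]) ∣ (d - 1))
    (n : ℕ) (hn : 1 ≤ n)
    (σ : MvPolynomial (Fin 2) ℤ_[p] →ₐ[ℤ_[p]] MvPolynomial (Fin 2) ℤ_[p])
    (hσX : σ (X 0) = C a * X 0 + C c * X 1)
    (hσY : σ (X 1) = C b * X 0 + C d * X 1)
    (f : MvPolynomial (Fin 2) ℤ_[p]) :
    σ f * (X 1) ^ (p ^ (n - 1)) - σ (f * (X 1) ^ (p ^ (n - 1))) ∈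
      (Ideal.span {(C (p : ℤ_[p]) : MvPolynomial (Fin 2) ℤ_[p]), X 0}) ^ n := by
  obtain ⟨k, rfl⟩ := Nat.exists_eq_add_of_le' hn
  exact phi_sigma_commutator_mem_ideal_pow_general (Ideal.subset_span (by simp)) σ
    (hσY ▸ mul_add_mul_smodEq_of_dvd_sub_one (by simpa using map_dvd C hd) _ _ _) k f
end

section
/- Let k ≥ n ≥ 1 be integers. Let H_k denote the ℤ_p-submodule of ℤ_p[X,Y] consisting of homogeneous polynomials of degree k (together with 0), and let W = H_k ∩ J^n. Then the quotient ℤ_p-module H_k / W is isomorphic to the direct sum ⊕_{j=1}^{n} ℤ_p/p^{j}ℤ_p. -/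
/-!
Membership in the `n`-th power of the ideal generated by `I` and a variable `X` is tested one
monomial at a time: the coefficient at a monomial of degree `d` in `X` has to lie in `I ^ (n - d)`.
A homogeneous polynomial of degree `k` in `X` and `Y` is given by its coefficients at
`X ^ d * Y ^ (k - d)`, and the condition on the `d`-th one is vacuous for `n ≤ d`. Reducing it
modulo `I ^ (n - d)` for each `d < n` is therefore a linear map with the required kernel, and it is
surjective because `n ≤ k + 1` leaves the coefficients with `d < n` free.
-/

section CoefficientsOfPowers

open MvPolynomial

variable {σ : Type*}

section CommSemiring

variable {R : Type*} [CommSemiring R] {I : Ideal R} {i : σ}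

theorem span_C_X_eq_map_C_sup_span_X (a : R) :
    Ideal.span {(C a : MvPolynomial σ R), X i} = (Ideal.span {a}).map C ⊔ Ideal.span {X i} := by
  rw [Ideal.span_insert, Ideal.map_span, Set.image_singleton]

theorem coeff_mul_mem_pow_sub {f g : MvPolynomial σ R} {a b : ℕ}
    (hf : ∀ m, coeff m f ∈ I ^ (a - m i)) (hg : ∀ m, coeff m g ∈ I ^ (b - m i)) (m : σ →₀ ℕ) :
    coeff m (f * g) ∈ I ^ (a + b - m i) := by
  classical
  rw [coeff_mul]
  refine Ideal.sum_mem _ fun x hx => ?_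
  have hm : x.1 i + x.2 i = m i :=
    DFunLike.congr_fun (Finset.HasAntidiagonal.mem_antidiagonal.1 hx) i
  have hle : a + b - m i ≤ (a - x.1 i) + (b - x.2 i) := by omega
  refine Ideal.pow_le_pow_right hle ?_
  rw [pow_add]
  exact Ideal.mul_mem_mul (hf x.1) (hg x.2)

theorem monomial_mem_pow_sup {n : ℕ} {m : σ →₀ ℕ} {c : R} (hc : c ∈ I ^ (n - m i)) :
    monomial m c ∈ (I.map C ⊔ Ideal.span {X i}) ^ n := by
  have hsplit : monomial m c = C c * X i ^ m i * monomial (m - Finsupp.single i (m i)) 1 := by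
    rw [X_pow_eq_monomial, C_mul_monomial, monomial_mul, mul_one, mul_one,
      add_tsub_cancel_of_le (Finsupp.single_le_iff.2 le_rfl)]
  have hC : C c ∈ (I.map C ⊔ Ideal.span {X i}) ^ (n - m i) := by
    refine Ideal.pow_right_mono le_sup_left _ ?_
    rw [← Ideal.map_pow]
    exact Ideal.mem_map_of_mem C hc
  have hX : X i ^ m i ∈ (I.map C ⊔ Ideal.span {X i}) ^ m i :=
    Ideal.pow_mem_pow (Ideal.mem_sup_right (Ideal.mem_span_singleton_self _)) _
  rw [hsplit]
  refine Ideal.mul_mem_right _ _ (Ideal.pow_le_pow_right (le_tsub_add : n ≤ n - m i + m i) ?_)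
  rw [pow_add]
  exact Ideal.mul_mem_mul hC hX

end CommSemiring

section CommRing

variable {R : Type*} [CommRing R] {I : Ideal R} {i : σ}

theorem coeff_mem_pow_one_sub_of_mem_sup {f : MvPolynomial σ R}
    (hf : f ∈ I.map C ⊔ Ideal.span {X i}) (m : σ →₀ ℕ) : coeff m f ∈ I ^ (1 - m i) := by
  classical
  obtain ⟨g, hg, h, hh, rfl⟩ := Submodule.mem_sup.1 hf
  obtain ⟨q, rfl⟩ := Ideal.mem_span_singleton.1 hh
  rw [coeff_add, coeff_X_mul']
  refine Ideal.add_mem _ ?_ ?_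
  · have hgm : coeff m g ∈ I ^ 1 := by
      rw [pow_one]
      exact mem_map_C_iff.1 hg m
    exact Ideal.pow_le_pow_right (Nat.sub_le 1 _) hgm
  · split_ifs with hm
    · simp [Nat.sub_eq_zero_of_le (Nat.one_le_iff_ne_zero.2 (Finsupp.mem_support_iff.1 hm))]
    · exact Ideal.zero_mem _

theorem mem_pow_map_C_sup_span_X_iff {n : ℕ} {f : MvPolynomial σ R} :
    f ∈ (I.map C ⊔ Ideal.span {X i}) ^ n ↔ ∀ m, coeff m f ∈ I ^ (n - m i) := by
  constructor
  · intro hf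
    induction n generalizing f with
    | zero => simp
    | succ n ih =>
      rw [pow_succ] at hf
      refine Submodule.mul_induction_on hf (fun g hg h hh => ?_) fun g h hg hh m => ?_
      · exact coeff_mul_mem_pow_sub (ih hg) (coeff_mem_pow_one_sub_of_mem_sup hh)
      · rw [coeff_add]
        exact Ideal.add_mem _ (hg m) (hh m)
  · intro hf
    rw [f.as_sum]
    exact Ideal.sum_mem _ fun m _ => monomial_mem_pow_sup (hf m)

theorem homogenize_mem_pow_sup_iff {n k : ℕ} (hnk : n ≤ k + 1) {q : Polynomial R} :
    q.homogenize k ∈ (I.map C ⊔ Ideal.span {X 0}) ^ n ↔ ∀ j < n, q.coeff j ∈ I ^ (n - j) := by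
  rw [mem_pow_map_C_sup_span_X_iff]
  constructor
  · intro h j hj
    have hjk : j + (k - j) = k := by omega
    simpa [Polynomial.coeff_homogenize, hjk] using h (fun₀ | 0 => j | 1 => k - j)
  · intro h m
    rw [Polynomial.coeff_homogenize]
    split_ifs
    · rcases lt_or_ge (m 0) n with hm | hm
      · exact h _ hm
      · simp [Nat.sub_eq_zero_of_le hm]
    · exact Ideal.zero_mem _

end CommRing

end CoefficientsOfPowers

section HomogeneousQuotient

open MvPolynomial

variable {R : Type*} [CommRing R] (I : Ideal R) {n k : ℕ}

variable (n k) in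
/-- The reduction of the coefficients of a homogeneous polynomial of degree `k` at
`X ^ d * Y ^ (k - d)` modulo `I ^ (n - d)`, for `d < n`. The coefficients are read off the
dehomogenization at `Y = 1`, and the `j`-th component is the one with `d = n - 1 - j`. -/
noncomputable def coeffReduction :
    homogeneousSubmodule (Fin 2) R k →ₗ[R] ∀ j : Fin n, R ⧸ I ^ ((j : ℕ) + 1) :=
  LinearMap.pi fun j => (I ^ ((j : ℕ) + 1)).mkQ ∘ₗ Polynomial.lcoeff R j.rev ∘ₗ
    (aeval ![Polynomial.X, 1]).toLinearMap ∘ₗ (homogeneousSubmodule (Fin 2) R k).subtype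

theorem coeffReduction_apply (f : homogeneousSubmodule (Fin 2) R k) (j : Fin n) :
    coeffReduction I n k f j =
      Ideal.Quotient.mk _ ((aeval ![Polynomial.X, 1] f.1 : Polynomial R).coeff j.rev) :=
  rfl

theorem coeffReduction_surjective (hnk : n ≤ k + 1) :
    Function.Surjective (coeffReduction I n k) := by
  classical
  intro y
  choose c hc using fun j => Ideal.Quotient.mk_surjective (y j)
  let q : Polynomial R := Polynomial.ofFn n (c ∘ Fin.rev)
  have hq : q.natDegree ≤ k := Polynomial.natDegree_le_iff_coeff_eq_zero.2 fun _ h =>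
    Polynomial.ofFn_coeff_eq_zero_of_ge _ (by omega)
  refine ⟨⟨q.homogenize k, q.isHomogeneous_homogenize⟩, funext fun j => ?_⟩
  rw [coeffReduction_apply, Polynomial.aeval_homogenize_X_one q hq,
    Polynomial.ofFn_coeff_eq_val_of_lt _ j.rev.isLt,
    Fin.eta, Function.comp_apply, Fin.rev_rev, hc]

theorem ker_coeffReduction (hnk : n ≤ k + 1) :
    LinearMap.ker (coeffReduction I n k) =
      Submodule.comap (homogeneousSubmodule (Fin 2) R k).subtype
        (Submodule.restrictScalars R ((I.map C ⊔ Ideal.span {X 0}) ^ n)) := by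
  ext f
  have hf : (aeval ![Polynomial.X, 1] f.1 : Polynomial R).homogenize k = f.1 :=
    Polynomial.homogenize_eq_of_isHomogeneous f.2 rfl
  rw [LinearMap.mem_ker, Submodule.mem_comap, Submodule.restrictScalars_mem,
    Submodule.subtype_apply, ← hf, homogenize_mem_pow_sup_iff hnk, funext_iff,
    Fin.rev_surjective.forall, Fin.forall_iff]
  refine forall₂_congr fun i hi => ?_
  rw [coeffReduction_apply, Pi.zero_apply, Ideal.Quotient.eq_zero_iff_mem, Fin.rev_rev]
  have hrev : ((Fin.rev ⟨i, hi⟩ : Fin n) : ℕ) + 1 = n - i := by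
    rw [Fin.val_rev, Fin.val_mk]
    omega
  rw [hrev]

theorem homogeneous_quotient_structure_general (hnk : n ≤ k + 1) :
    Nonempty
      ((homogeneousSubmodule (Fin 2) R k ⧸
          Submodule.comap (homogeneousSubmodule (Fin 2) R k).subtype
            (Submodule.restrictScalars R ((I.map C ⊔ Ideal.span {X 0}) ^ n))) ≃ₗ[R]
        ∀ j : Fin n, R ⧸ I ^ ((j : ℕ) + 1)) :=
  ⟨Submodule.quotEquivOfEq _ _ (ker_coeffReduction I hnk).symm ≪≫ₗ
    (coeffReduction I n k).quotKerEquivOfSurjective (coeffReduction_surjective I hnk)⟩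

end HomogeneousQuotient

set_option synthInstance.maxHeartbeats 1000000 in
open MvPolynomial in
theorem homogeneous_quotient_structure
    (p : ℕ) [Fact p.Prime] (n k : ℕ) (hn : 1 ≤ n) (hk : n ≤ k) :
    Nonempty
      ((↥(homogeneousSubmodule (Fin 2) ℤ_[p] k) ⧸
          (Submodule.comap (homogeneousSubmodule (Fin 2) ℤ_[p] k).subtype
            (Submodule.restrictScalars ℤ_[p]
              ((Ideal.span {(C (p : ℤ_[p]) : MvPolynomial (Fin 2) ℤ_[p]), X 0}) ^ n)))) ≃ₗ[ℤ_[p]]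
        (∀ j : Fin n, ℤ_[p] ⧸ Ideal.span {(p : ℤ_[p]) ^ ((j : ℕ) + 1)})) := by
  obtain ⟨e⟩ := homogeneous_quotient_structure_general (Ideal.span {(p : ℤ_[p])})
    (Nat.le_succ_of_le hk)
  rw [span_C_X_eq_map_C_sup_span_X]
  exact ⟨e ≪≫ₗ LinearEquiv.piCongrRight fun j =>
    Submodule.quotEquivOfEq _ _ (Ideal.span_singleton_pow _ _)⟩
end

section
/- Let p be a prime, n ≥ 1 an integer, and P a finite abelian group (written additively) such that p^n · x = 0 for all x ∈ P. Let S be a subgroup of P, T a subgroup of S, and Q = S/T. For an abelian group G and a natural number μ, let p^μ G denote the image of the map x ↦ p^μ · x on G. Then for every 0 ≤ μ ≤ n − 1: |p^μ Q| · |p^{μ+1} P| ≤ |p^μ P| · |p^{μ+1} Q| (equivalently, |p^μ Q / p^{μ+1} Q| ≤ |p^μ P / p^{μ+1} P|). -/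
/-!
Multiplication by `b` maps `aP / aS` onto `abP / abS`, so `|abP : abS|` divides `|aP : aS|`.
Computing `|aP : abS|` along the two chains `abS ≤ aS ≤ aP` and `abS ≤ abP ≤ aP` and cancelling
then shows that `|aS : abS|` divides `|aP : abP|`, as soon as `S` has finite index in `P`. A
quotient map `S → Q` induces a surjection `aS / abS → aQ / abQ`, so `|aQ : abQ|` divides
`|aS : abS|`. Take `a = p ^ μ` and `b = p`.
-/

section AddSubgroup

variable {G H : Type*} [AddGroup G] [AddGroup H]

theorem relIndex_map_map_dvd (f : G →+ H) (A B : AddSubgroup G) :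
    (B.map f).relIndex (A.map f) ∣ B.relIndex A := by
  rw [← AddSubgroup.relIndex_comap]
  exact AddSubgroup.relIndex_dvd_of_le_left A (AddSubgroup.le_comap_map f B)

theorem relIndex_map_dvd_of_le (φ : G →+ G) {A B : AddSubgroup G} (hBA : B ≤ A)
    (hA : A.map φ ≤ A) (hB : B.map φ ≤ B) (hindex : B.relIndex A ≠ 0) :
    (B.map φ).relIndex B ∣ (A.map φ).relIndex A := by
  refine Nat.dvd_of_mul_dvd_mul_left (Nat.pos_of_ne_zero hindex) ?_
  calc B.relIndex A * (B.map φ).relIndex B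
      = (B.map φ).relIndex A := by
        rw [mul_comm, AddSubgroup.relIndex_mul_relIndex _ _ _ hB hBA]
    _ = (B.map φ).relIndex (A.map φ) * (A.map φ).relIndex A :=
        (AddSubgroup.relIndex_mul_relIndex _ _ _ (AddSubgroup.map_mono hBA) hA).symm
    _ ∣ B.relIndex A * (A.map φ).relIndex A :=
        Nat.mul_dvd_mul_right (relIndex_map_map_dvd φ A B) _

end AddSubgroup

section Pointwise

open scoped Pointwise

section Monoid

variable {R G H : Type*} [Monoid R] [AddGroup G] [DistribMulAction R G] [AddGroup H]
  [DistribMulAction R H]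

theorem map_pointwise_smul (f : G →+[R] H) (a : R) (A : AddSubgroup G) :
    (a • A).map (f : G →+ H) = a • A.map (f : G →+ H) :=
  SetLike.coe_injective (Set.image_smul_comm f a A (map_smul f a))

theorem mul_smul_top_le (a b : R) : (a * b) • (⊤ : AddSubgroup G) ≤ a • ⊤ := by
  rw [mul_smul]
  exact AddSubgroup.map_mono le_top

theorem card_smul_top_eq_card_range (a : R) :
    Nat.card (a • (⊤ : AddSubgroup G) : AddSubgroup G) =
      Nat.card (Set.range fun x : G => a • x) :=
  congrArg (fun s : Set G => Nat.card s) Set.image_univ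

variable (G) in
/-- The order of the graded piece `aG / abG`, encoded as a relative index because `G` need not be
commutative; it is `0` when the index is infinite. -/
noncomputable def gradedPieceCard (a b : R) : ℕ :=
  ((a * b) • (⊤ : AddSubgroup G)).relIndex (a • ⊤)

theorem card_range_mul_smul_mul_gradedPieceCard (a b : R) :
    Nat.card (Set.range fun x : G => (a * b) • x) * gradedPieceCard G a b =
      Nat.card (Set.range fun x : G => a • x) := by
  rw [← card_smul_top_eq_card_range, ← card_smul_top_eq_card_range, gradedPieceCard,
    ← AddSubgroup.relIndex_bot_left, ← AddSubgroup.relIndex_bot_left]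
  exact AddSubgroup.relIndex_mul_relIndex _ _ _ bot_le (mul_smul_top_le a b)

theorem card_range_smul_mul_le_of_gradedPieceCard_dvd [Finite H] {a b : R}
    (h : gradedPieceCard G a b ∣ gradedPieceCard H a b) :
    Nat.card (Set.range fun x : G => a • x) * Nat.card (Set.range fun x : H => (a * b) • x) ≤
      Nat.card (Set.range fun x : H => a • x) *
        Nat.card (Set.range fun x : G => (a * b) • x) := by
  have hle : gradedPieceCard G a b ≤ gradedPieceCard H a b :=
    Nat.le_of_dvd (Nat.pos_of_ne_zero AddSubgroup.index_ne_zero_of_finite) h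
  rw [← card_range_mul_smul_mul_gradedPieceCard (G := G) a b,
    ← card_range_mul_smul_mul_gradedPieceCard (G := H) a b]
  calc Nat.card (Set.range fun x : G => (a * b) • x) * gradedPieceCard G a b *
        Nat.card (Set.range fun x : H => (a * b) • x)
      ≤ Nat.card (Set.range fun x : G => (a * b) • x) * gradedPieceCard H a b *
        Nat.card (Set.range fun x : H => (a * b) • x) := by gcongr
    _ = _ := by ring

theorem gradedPieceCard_dvd_of_surjective (f : G →+[R] H) (hf : Function.Surjective f) (a b : R) :
    gradedPieceCard H a b ∣ gradedPieceCard G a b := by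
  have hmap (c : R) : (c • (⊤ : AddSubgroup G)).map (f : G →+ H) = c • ⊤ := by
    rw [map_pointwise_smul, AddSubgroup.map_top_of_surjective _ hf]
  simpa only [hmap, gradedPieceCard] using relIndex_map_map_dvd (f : G →+ H) (a • ⊤) ((a * b) • ⊤)

end Monoid

variable {R P S Q : Type*} [CommMonoid R] [AddGroup P] [DistribMulAction R P] [AddGroup S]
  [DistribMulAction R S] [AddGroup Q] [DistribMulAction R Q]

theorem gradedPieceCard_dvd_of_injective (f : S →+[R] P) (hf : Function.Injective f)
    [hindex : (f : S →+ P).range.FiniteIndex] (a b : R) :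
    gradedPieceCard S a b ∣ gradedPieceCard P a b := by
  set B : AddSubgroup P := (f : S →+ P).range with hB
  have hmap (c : R) : (c • (⊤ : AddSubgroup S)).map (f : S →+ P) = c • B := by
    rw [map_pointwise_smul, hB, AddMonoidHom.range_eq_map]
  have hS : gradedPieceCard S a b = (b • a • B).relIndex (a • B) := by
    rw [gradedPieceCard, ← AddSubgroup.relIndex_map_map_of_injective (f := (f : S →+ P)) _ _ hf,
      hmap, hmap, mul_comm, mul_smul]
  have hP : gradedPieceCard P a b = (b • a • (⊤ : AddSubgroup P)).relIndex (a • ⊤) := by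
    rw [gradedPieceCard, mul_comm, mul_smul]
  have hsmul_top : b • a • (⊤ : AddSubgroup P) ≤ a • ⊤ := by
    rw [smul_comm]
    exact AddSubgroup.map_mono le_top
  have hsmul_B : b • a • B ≤ a • B := by
    rw [smul_comm, ← hmap b]
    exact AddSubgroup.map_mono (AddSubgroup.map_le_range _ _)
  have hdvd_index : (a • B).relIndex (a • ⊤) ∣ B.index := by
    rw [← AddSubgroup.relIndex_top_right]
    exact relIndex_map_map_dvd (DistribSMul.toAddMonoidHom P a) ⊤ B
  rw [hS, hP]
  exact relIndex_map_dvd_of_le (DistribSMul.toAddMonoidHom P b)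
    (AddSubgroup.map_mono le_top) hsmul_top hsmul_B
    (ne_zero_of_dvd_ne_zero hindex.index_ne_zero hdvd_index)

/-- The subobject `S` of `P` is given by an embedding because an additive subgroup of `P` need not
be stable under `R`. -/
theorem subquotient_graded_piece_card_le_general (i : S →+[R] P) (hi : Function.Injective i)
    [(i : S →+ P).range.FiniteIndex] (π : S →+[R] Q) (hπ : Function.Surjective π) (a b : R) :
    gradedPieceCard Q a b ∣ gradedPieceCard P a b :=
  (gradedPieceCard_dvd_of_surjective π hπ a b).trans (gradedPieceCard_dvd_of_injective i hi a b)

end Pointwise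

theorem subquotient_graded_piece_card_le
    (p : ℕ) (hp : p.Prime) (n : ℕ) (hn : 1 ≤ n)
    (P : Type*) [AddCommGroup P] [Finite P] (hP : ∀ x : P, p ^ n • x = 0)
    (S T : AddSubgroup P) (hTS : T ≤ S)
    (μ : ℕ) (hμ : μ ≤ n - 1) :
    Nat.card (Set.range fun x : (S ⧸ T.addSubgroupOf S) => p ^ μ • x) *
        Nat.card (Set.range fun x : P => p ^ (μ + 1) • x) ≤
      Nat.card (Set.range fun x : P => p ^ μ • x) *
        Nat.card (Set.range fun x : (S ⧸ T.addSubgroupOf S) => p ^ (μ + 1) • x) := by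
  simpa only [pow_succ] using card_range_smul_mul_le_of_gradedPieceCard_dvd <|
    subquotient_graded_piece_card_le_general
      S.subtype.toNatLinearMap.toDistribMulActionHom S.subtype_injective
      (QuotientAddGroup.mk' (T.addSubgroupOf S)).toNatLinearMap.toDistribMulActionHom
      (QuotientAddGroup.mk'_surjective _) (p ^ μ) p
end

section
/- Let p be a prime. Suppose P ≅ ⊕_{i=1}^{r} ℤ/p^{a_i}ℤ with a_1 ≥ a_2 ≥ … ≥ a_r ≥ 1 and Q ≅ ⊕_{i=1}^{s} ℤ/p^{c_i}ℤ with c_1 ≥ c_2 ≥ … ≥ c_s ≥ 1, and suppose Q is isomorphic to a subquotient of P (that is, Q ≅ S/T for some subgroups T ≤ S ≤ P). Then s ≤ r and c_i ≤ a_i for every 1 ≤ i ≤ s. -/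
/-!
Over a principal ideal domain, the minimal number of generators of a module cannot increase when
passing to a submodule or to a quotient. If `Q = ∏ R ⧸ J k` is a subquotient of `P = ∏ R ⧸ I i` and
`d` is a scalar, then `d Q` is a subquotient of `d P`. Multiplication by `d` kills the factors of
`P` with `d ∈ I i`, so `d P` needs at most as many generators as there are `i` with `d ∉ I i`; on
the other side `d Q ≅ ∏ R ⧸ (J k : d)` surjects onto a power of `R ⧸ K`, with one factor for each
`k` such that `(J k : d) ≤ K`. For increasing `I` and `J` and `K = (J k : d)`, an element `d` of
`I k` outside `J k` would give at most `k` generators (indices start at `0`) against at least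
`k + 1`.
-/

section SpanFinrank

variable {R M N P : Type*} [CommRing R] [AddCommGroup M] [Module R M] [AddCommGroup N] [Module R N]
  [AddCommGroup P] [Module R P]

lemma spanFinrank_top_le_of_surjective [Module.Finite R M] (f : M →ₗ[R] N)
    (hf : Function.Surjective f) :
    (⊤ : Submodule R N).spanFinrank ≤ (⊤ : Submodule R M).spanFinrank := by
  simpa only [Submodule.map_top, LinearMap.range_eq_top.2 hf] using
    Submodule.spanFinrank_map_le_of_fg f (Module.Finite.fg_top (R := R) (M := M))

lemma spanFinrank_le_spanFinrank_top [IsDomain R] [IsPrincipalIdealRing R] [Module.Finite R M]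
    (S : Submodule R M) : S.spanFinrank ≤ (⊤ : Submodule R M).spanFinrank := by
  obtain ⟨s, hcard, hspan⟩ :=
    (Module.Finite.fg_top (R := R) (M := M)).exists_span_finset_card_eq_spanFinrank
  let π : (s → R) →ₗ[R] M := Fintype.linearCombination R (fun x : s ↦ (x : M))
  have hπ : Function.Surjective π := by
    rw [← LinearMap.range_eq_top, Fintype.range_linearCombination, ← hspan]
    exact congrArg (Submodule.span R) Subtype.range_coe
  calc S.spanFinrank
      = ((S.comap π).map π).spanFinrank := by rw [Submodule.map_comap_eq_of_surjective hπ]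
    _ ≤ (S.comap π).spanFinrank :=
        Submodule.spanFinrank_map_le_of_fg π (IsNoetherian.noetherian _)
    _ = Module.finrank R (S.comap π) := by
        rw [Module.finrank_eq_spanFinrank_of_free, Submodule.spanFinrank_top]
    _ ≤ Module.finrank R (s → R) := Submodule.finrank_le _
    _ = (⊤ : Submodule R M).spanFinrank := by
        rw [Module.finrank_fintype_fun_eq_card, Fintype.card_coe, hcard]

lemma spanFinrank_top_le_of_ker_le_ker [IsDomain R] [IsPrincipalIdealRing R] [Module.Finite R N]
    (u : M →ₗ[R] N) (w : M →ₗ[R] P) (hw : Function.Surjective w)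
    (huw : LinearMap.ker u ≤ LinearMap.ker w) :
    (⊤ : Submodule R P).spanFinrank ≤ (⊤ : Submodule R N).spanFinrank := by
  let v : LinearMap.range u →ₗ[R] P :=
    (LinearMap.ker u).liftQ w huw ∘ₗ u.quotKerEquivRange.symm.toLinearMap
  have hv : Function.Surjective v :=
    (Function.Surjective.of_comp (f := (LinearMap.ker u).liftQ w huw)
      (g := (LinearMap.ker u).mkQ) hw).comp u.quotKerEquivRange.symm.surjective
  calc (⊤ : Submodule R P).spanFinrank
      ≤ (⊤ : Submodule R (LinearMap.range u)).spanFinrank := spanFinrank_top_le_of_surjective v hv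
    _ = (LinearMap.range u).spanFinrank := Submodule.spanFinrank_top _
    _ ≤ (⊤ : Submodule R N).spanFinrank := spanFinrank_le_spanFinrank_top _

end SpanFinrank

section CyclicModules

variable {R : Type*} [CommRing R]

lemma spanFinrank_top_fun_quotient {K : Ideal R} (hK : K ≠ ⊤) (κ : Type*) [Finite κ] :
    (⊤ : Submodule R (κ → R ⧸ K)).spanFinrank = Nat.card κ := by
  have := Fintype.ofFinite κ
  have : Nontrivial (R ⧸ K) := Ideal.Quotient.nontrivial_iff.2 hK
  have hscalars : (⊤ : Submodule R (κ → R ⧸ K)).spanRank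
      = (⊤ : Submodule (R ⧸ K) (κ → R ⧸ K)).spanRank :=
    Submodule.spanRank_restrictScalars_eq (R := R) Ideal.Quotient.mk_surjective ⊤
  rw [Submodule.spanFinrank, hscalars, ← Submodule.spanFinrank,
    ← Module.finrank_eq_spanFinrank_of_free, Module.finrank_fintype_fun_eq_card,
    Nat.card_eq_fintype_card]

lemma spanFinrank_top_pi_quotient_le {ι : Type*} [Finite ι] (I : ι → Ideal R) :
    (⊤ : Submodule R (∀ i, R ⧸ I i)).spanFinrank ≤ Nat.card ι := by
  rcases subsingleton_or_nontrivial R with _ | _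
  · simp only [Submodule.spanFinrank_subsingleton, zero_le]
  have := Fintype.ofFinite ι
  calc (⊤ : Submodule R (∀ i, R ⧸ I i)).spanFinrank
      ≤ (⊤ : Submodule R (ι → R)).spanFinrank :=
        spanFinrank_top_le_of_surjective (LinearMap.piMap fun i ↦ (I i).mkQ)
          (Function.Surjective.piMap fun i ↦ (I i).mkQ_surjective)
    _ = Nat.card ι := by
        rw [← Module.finrank_eq_spanFinrank_of_free, Module.finrank_fintype_fun_eq_card,
          Nat.card_eq_fintype_card]

lemma smul_quotient_eq_zero_of_mem {I : Ideal R} {d : R} (hd : d ∈ I) (x : R ⧸ I) : d • x = 0 := by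
  obtain ⟨y, rfl⟩ := I.mkQ_surjective x
  exact (Submodule.Quotient.mk_eq_zero I).2 (I.mul_mem_right y hd)

lemma factor_eq_zero_of_smul_eq_zero {J K : Ideal R} {d : R} (hK : J.colon {d} ≤ K)
    {x : R ⧸ J} (hx : d • x = 0) :
    Submodule.factor (Ideal.le_colon.trans hK) x = 0 := by
  obtain ⟨y, rfl⟩ := J.mkQ_surjective x
  have hdy : d * y ∈ J := (Submodule.Quotient.mk_eq_zero J).1 hx
  have hy : y ∈ J.colon {d} := Submodule.mem_colon_singleton.2 (by rwa [smul_eq_mul, mul_comm])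
  exact (Submodule.Quotient.mk_eq_zero K).2 (hK hy)

variable [IsDomain R] [IsPrincipalIdealRing R] {M : Type*} [AddCommGroup M] [Module R M]

-- `∏ R ⧸ J k` is a subquotient of `∏ R ⧸ I i` exactly when there are such an `M`, `g` and `f`.
lemma ncard_colon_le_ncard_notMem_of_subquotient {ι κ : Type*} [Finite ι] [Finite κ]
    {I : ι → Ideal R} {J : κ → Ideal R}
    (g : M →ₗ[R] ∀ i, R ⧸ I i) (hg : Function.Injective g)
    (f : M →ₗ[R] ∀ k, R ⧸ J k) (hf : Function.Surjective f)
    (d : R) {K : Ideal R} (hK : K ≠ ⊤) :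
    {k | (J k).colon {d} ≤ K}.ncard ≤ {i | d ∉ I i}.ncard := by
  let s := {k | (J k).colon {d} ≤ K}
  let t := {i | d ∉ I i}
  have hJK (k : s) : J k ≤ K := Ideal.le_colon.trans k.2
  let u : M →ₗ[R] ∀ i : t, R ⧸ I i := LinearMap.pi fun i ↦ d • LinearMap.proj i.1 ∘ₗ g
  let w : M →ₗ[R] s → R ⧸ K :=
    LinearMap.pi fun k ↦ Submodule.factor (hJK k) ∘ₗ LinearMap.proj k.1 ∘ₗ f
  have hw : Function.Surjective w :=
    (Function.Surjective.piMap fun k ↦ Submodule.factor_surjective (hJK k)).comp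
      ((Subtype.surjective_restrict _).comp hf)
  have huw : LinearMap.ker u ≤ LinearMap.ker w := by
    intro x hx
    have hgx : d • g x = 0 := by
      ext i : 1
      by_cases hi : d ∈ I i
      · exact smul_quotient_eq_zero_of_mem hi (g x i)
      · exact congrFun hx ⟨i, hi⟩
    have hdx : d • x = 0 := hg (by rw [map_smul, hgx, map_zero])
    have hfx : d • f x = 0 := by rw [← map_smul, hdx, map_zero]
    exact funext fun k ↦ factor_eq_zero_of_smul_eq_zero k.2 (congrFun hfx k)
  calc s.ncard
      = (⊤ : Submodule R (s → R ⧸ K)).spanFinrank := (spanFinrank_top_fun_quotient hK s).symm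
    _ ≤ (⊤ : Submodule R (∀ i : t, R ⧸ I i)).spanFinrank :=
        spanFinrank_top_le_of_ker_le_ker u w hw huw
    _ ≤ t.ncard := spanFinrank_top_pi_quotient_le _

lemma mem_of_forall_le_mem_of_subquotient {r s : ℕ} {I : Fin r → Ideal R} {J : Fin s → Ideal R}
    (hJ : Monotone J)
    (g : M →ₗ[R] ∀ i, R ⧸ I i) (hg : Function.Injective g)
    (f : M →ₗ[R] ∀ k, R ⧸ J k) (hf : Function.Surjective f)
    (k : Fin s) {d : R} (hd : ∀ i : Fin r, k.val ≤ i → d ∈ I i) : d ∈ J k := by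
  by_contra hdk
  have hK : (J k).colon {d} ≠ ⊤ := fun h ↦
    hdk (by simpa using Submodule.mem_colon_singleton.1 ((Ideal.eq_top_iff_one _).1 h))
  have hlower : k + 1 ≤ {l | (J l).colon {d} ≤ (J k).colon {d}}.ncard := calc
    k + 1 = (Set.Iic k).ncard := by simp [Set.ncard_eq_toFinset_card']
    _ ≤ _ := Set.ncard_le_ncard fun l hl ↦ Submodule.colon_mono (hJ hl) le_rfl
  have hupper : {i | d ∉ I i}.ncard ≤ k := calc
    {i | d ∉ I i}.ncard = (Fin.val '' {i | d ∉ I i}).ncard :=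
      (Set.ncard_image_of_injective _ Fin.val_injective).symm
    _ ≤ (Set.Iio k.val).ncard :=
      Set.ncard_le_ncard (Set.image_subset_iff.2 fun i hi ↦ not_le.1 fun hki ↦ hi (hd i hki))
    _ = k := by simp [Set.ncard_eq_toFinset_card']
  have hle := ncard_colon_le_ncard_notMem_of_subquotient g hg f hf d hK
  lia

theorem subquotient_elementary_divisors_le_general {r s : ℕ}
    {I : Fin r → Ideal R} (hI : Monotone I)
    {J : Fin s → Ideal R} (hJ : Monotone J) (hJ_ne_top : ∀ k, J k ≠ ⊤)
    (g : M →ₗ[R] ∀ i, R ⧸ I i) (hg : Function.Injective g)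
    (f : M →ₗ[R] ∀ k, R ⧸ J k) (hf : Function.Surjective f) :
    ∃ h : s ≤ r, ∀ k, I (Fin.castLE h k) ≤ J k := by
  have h : s ≤ r := by
    by_contra! hrs
    exact hJ_ne_top ⟨r, hrs⟩ ((Ideal.eq_top_iff_one _).2
      (mem_of_forall_le_mem_of_subquotient hJ g hg f hf _ fun i hi ↦ absurd i.2 hi.not_gt))
  exact ⟨h, fun k d hd ↦ mem_of_forall_le_mem_of_subquotient hJ g hg f hf k fun i hi ↦ hI hi hd⟩

end CyclicModules

section ZMod

/-- A product of the groups `ZMod (n i)` as a product of cyclic `ℤ`-modules, in the form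
`ℤ ⧸ I i` used for modules over a general ring. -/
def piZModEquivPiQuotient {ι : Type*} (n : ι → ℕ) :
    (∀ i, ZMod (n i)) ≃+ ∀ i, ℤ ⧸ Ideal.span {(n i : ℤ)} :=
  AddEquiv.piCongrRight fun i ↦ (Int.quotientSpanNatEquivZMod (n i)).symm.toAddEquiv

lemma zmod_invariantFactors_dvd_of_subquotient {r s : ℕ}
    {m : Fin r → ℕ} (hm : ∀ i j, i ≤ j → m j ∣ m i)
    {n : Fin s → ℕ} (hn : ∀ i j, i ≤ j → n j ∣ n i) (hn_ne_one : ∀ k, n k ≠ 1)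
    (S T : AddSubgroup (∀ i, ZMod (m i))) (e : (∀ k, ZMod (n k)) ≃+ S ⧸ T.addSubgroupOf S) :
    ∃ h : s ≤ r, ∀ k, n k ∣ m (Fin.castLE h k) := by
  have span_le_span {a b : ℕ} : Ideal.span {(a : ℤ)} ≤ Ideal.span {(b : ℤ)} ↔ b ∣ a := by
    rw [Ideal.span_singleton_le_span_singleton, Int.natCast_dvd_natCast]
  let g := (piZModEquivPiQuotient m).toAddMonoidHom.comp S.subtype
  let f := ((e.symm.trans (piZModEquivPiQuotient n)).toAddMonoidHom).comp
    (QuotientAddGroup.mk' (T.addSubgroupOf S))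
  have hg : Function.Injective g := (piZModEquivPiQuotient m).injective.comp S.subtype_injective
  have hf : Function.Surjective f :=
    (e.symm.trans (piZModEquivPiQuotient n)).surjective.comp (QuotientAddGroup.mk'_surjective _)
  obtain ⟨h, hle⟩ := subquotient_elementary_divisors_le_general
    (fun i j hij ↦ span_le_span.2 (hm i j hij)) (fun i j hij ↦ span_le_span.2 (hn i j hij))
    (fun k ↦ by simpa [Ideal.span_singleton_eq_top, Int.ofNat_isUnit] using hn_ne_one k)
    g.toIntLinearMap hg f.toIntLinearMap hf
  exact ⟨h, fun k ↦ span_le_span.1 (hle k)⟩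

end ZMod

theorem subquotient_elementary_divisors_le
    (p : ℕ) (hp : p.Prime) (r s : ℕ)
    (a : Fin r → ℕ) (ha : Antitone a) (ha1 : ∀ i, 1 ≤ a i)
    (c : Fin s → ℕ) (hc : Antitone c) (hc1 : ∀ i, 1 ≤ c i)
    (S T : AddSubgroup (∀ i : Fin r, ZMod (p ^ a i))) (hTS : T ≤ S)
    (hQ : Nonempty ((∀ i : Fin s, ZMod (p ^ c i)) ≃+ (S ⧸ T.addSubgroupOf S))) :
    ∃ h : s ≤ r, ∀ i : Fin s, c i ≤ a (Fin.castLE h i) := by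
  obtain ⟨h, hdvd⟩ := zmod_invariantFactors_dvd_of_subquotient
    (fun i j hij ↦ pow_dvd_pow p (ha hij)) (fun i j hij ↦ pow_dvd_pow p (hc hij))
    (fun k ↦ (Nat.one_lt_pow (Nat.one_le_iff_ne_zero.1 (hc1 k)) hp.one_lt).ne') S T hQ.some
  exact ⟨h, fun k ↦ (Nat.pow_dvd_pow_iff_le_right hp.one_lt).1 (hdvd k)⟩
end

section
/- Let h ≥ 1 and d ≥ 1 be integers and j ≥ 0 a natural number. Then Σ_{i=1}^{j} (⌈(i/h)^{1/d}⌉ − 1) ≥ (d/(d+1)) · (j/h)^{(d+1)/d} − j, where the powers are real powers, the sum is over integers i, and ⌈·⌉ denotes the ceiling of a real number. -/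
/-!
Dropping the ceilings leaves `∑ (i / h) ^ (1 / d)`, a right-endpoint Riemann sum of an increasing
function, so it dominates the integral of `(x / h) ^ (1 / d)` over `[0, j]`, which is
`h * (d / (d + 1)) * (j / h) ^ ((d + 1) / d)`.
-/

theorem integral_sub_le_sum_ceil_sub_one {f : ℝ → ℝ} {a b : ℕ} (hab : a ≤ b)
    (hf : MonotoneOn f (Set.Icc a b)) :
    (∫ x in a..b, f x) - (b - a) ≤ ∑ i ∈ Finset.Ioc a b, ((⌈f i⌉ : ℝ) - 1) := by
  have integral_le_sum : ∫ x in a..b, f x ≤ ∑ i ∈ Finset.Ioc a b, f i := by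
    rw [← Finset.Ico_add_one_add_one_eq_Ioc, ← Finset.sum_Ico_add' (fun i : ℕ => f i)]
    exact hf.integral_le_sum_Ico hab
  calc (∫ x in a..b, f x) - (b - a)
      ≤ ∑ i ∈ Finset.Ioc a b, f i - (b - a) := by gcongr
    _ = ∑ i ∈ Finset.Ioc a b, (f i - 1) := by simp [Finset.sum_sub_distrib, Nat.cast_sub hab]
    _ ≤ ∑ i ∈ Finset.Ioc a b, ((⌈f i⌉ : ℝ) - 1) := by
      gcongr
      exact Int.le_ceil _

theorem integral_zero_div_rpow {h s : ℝ} (hh : h ≠ 0) (hs : -1 < s) (a : ℝ) :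
    ∫ x in (0 : ℝ)..a, (x / h) ^ s = h * ((a / h) ^ (s + 1) / (s + 1)) := by
  have hs' : s + 1 ≠ 0 := by linarith
  rw [intervalIntegral.integral_comp_div (fun x => x ^ s) hh, zero_div, integral_rpow (.inl hs),
    Real.zero_rpow hs', sub_zero, smul_eq_mul]

theorem monotoneOn_div_rpow {h s : ℝ} (hh : 0 ≤ h) (hs : 0 ≤ s) :
    MonotoneOn (fun x : ℝ => (x / h) ^ s) (Set.Ici 0) := by
  intro x (hx : 0 ≤ x) y _ hxy
  dsimp only
  gcongr

theorem sum_ceil_rpow_lower_bound_general {h d : ℝ} (hh : 0 < h) (hd : 0 < d) (j : ℕ) :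
    ∑ i ∈ Finset.Icc 1 j, ((⌈((i : ℝ) / h) ^ (1 / d)⌉ : ℝ) - 1) ≥
      h * (d / (d + 1) * ((j : ℝ) / h) ^ ((d + 1) / d)) - j := by
  have one_div_d_nonneg : 0 ≤ 1 / d := by positivity
  have exponent_eq : 1 / d + 1 = (d + 1) / d := by field_simp; ring
  have monotone_rpow : MonotoneOn (fun x : ℝ => (x / h) ^ (1 / d)) (Set.Icc ((0 : ℕ) : ℝ) j) :=
    (monotoneOn_div_rpow hh.le one_div_d_nonneg).mono fun x hx => by simpa using hx.1
  calc h * (d / (d + 1) * ((j : ℝ) / h) ^ ((d + 1) / d)) - j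
      = (∫ x in (0 : ℝ)..j, (x / h) ^ (1 / d)) - j := by
        rw [integral_zero_div_rpow hh.ne' (by linarith), exponent_eq]
        field_simp
    _ ≤ ∑ i ∈ Finset.Icc 1 j, ((⌈((i : ℝ) / h) ^ (1 / d)⌉ : ℝ) - 1) := by
        simpa [← Finset.Icc_add_one_left_eq_Ioc] using
          integral_sub_le_sum_ceil_sub_one j.zero_le monotone_rpow

theorem sum_ceil_rpow_lower_bound
    (h d : ℕ) (hh : 1 ≤ h) (hd : 1 ≤ d) (j : ℕ) :
    (∑ i ∈ Finset.Icc 1 j, ((⌈((i : ℝ) / h) ^ ((1 : ℝ) / d)⌉ : ℝ) - 1)) ≥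
      ((d : ℝ) / (d + 1)) * ((j : ℝ) / h) ^ (((d : ℝ) + 1) / d) - j :=
  (sub_le_sub_right (le_mul_of_one_le_left (by positivity) (by exact_mod_cast hh)) _).trans
    (sum_ceil_rpow_lower_bound_general (by positivity) (by positivity) j)
end
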